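/- arXiv:2401.01971 — 2 statements merged into one kernel-verified Lean document; each statement's English description precedes it below -/
import Mathlib

section
/- Let φ be a finite complex Borel measure on the unit circle 𝕋, let 1 ≤ m ≤ n, and assume D_j[φ] ≠ 0 for every j with n−m ≤ j ≤ n−1. For z_1,…,z_m ∈ ℂ let T_n[φ; z_1,…,z_m] denote the determinant of the n×n matrix whose (j,k) entry (indices starting at 1) equals φ_{k−j} for 1 ≤ k ≤ n−m and equals z_{k−(n−m)}^{j−1} for n−m+1 ≤ k ≤ n. Then T_n[φ; z_1,…,z_m] = D_{n−m}[φ] · det( q_{n−m+i−1}(z_k) )_{i,k=1}^{m}, where q_k is the k-th monic bi-orthogonal polynomial of the first kind. (This is Proposition 1.2 of the paper, stated with the bi-orthonormal polynomials replaced by their monic normalizations to avoid square-root ambiguities.) -/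
open MeasureTheory Matrix

noncomputable instance : MeasurableSpace Circle := borel Circle

/-- The `j`-th Fourier coefficient `φ_j = ∫_𝕋 ζ^{-j} dφ(ζ)` of the finite complex Borel
measure `dφ = f dσ` on the unit circle. -/
noncomputable def fcoef (σ : Measure Circle) (f : Circle → ℂ) (j : ℤ) : ℂ :=
  ∫ z, ((z : ℂ) ^ (-j)) * f z ∂σ

/-- The `n × n` Toeplitz determinant `D_n[φ] = det (φ_{j-k})_{j,k=0}^{n-1}` (with `D_0[φ] = 1`). -/
noncomputable def toeplitzDet (σ : Measure Circle) (f : Circle → ℂ) (n : ℕ) : ℂ :=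
  Matrix.det (Matrix.of fun j k : Fin n => fcoef σ f ((j : ℤ) - (k : ℤ)))

/-- The `k`-th monic bi-orthogonal polynomial of the first kind, `q_k(z) = A_k(z)/D_k[φ]`,
where `A_k(z)` is the determinant of the `(k+1) × (k+1)` matrix whose `i`-th row
(`0 ≤ i ≤ k-1`) is `(φ_i, φ_{i-1}, …, φ_{i-k})` and whose last row is `(1, z, …, z^k)`. -/
noncomputable def monicBOP₁ (σ : Measure Circle) (f : Circle → ℂ) (k : ℕ) (z : ℂ) : ℂ :=
  (Matrix.det (Matrix.of fun i j : Fin (k + 1) =>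
      if (i : ℕ) < k then fcoef σ f ((i : ℤ) - (j : ℤ)) else z ^ (j : ℕ))) /
    toeplitzDet σ f k

/-!
Let `A_i` be the row `(φ_{i-j})_j`, `D_k` the leading minors of the infinite matrix with these
rows, and let `B_k(v)` be the minor of order `k + 1` with rows `A_0, …, A_{k-1}, v`. The form `B_k`
is linear, vanishes at `A_0, …, A_{k-1}`, and involves only the coordinates `v_0, …, v_k`, the last
one with coefficient `D_k`. Put `N = n - m`. Replacing the rows `N, …, N + m - 1` of the bordered
matrix by the combinations of rows given by `B_N, …, B_{N+m-1}` is therefore a lower triangular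
operation of determinant `D_N ⋯ D_{N+m-1}`, and it makes the matrix block upper triangular with
diagonal blocks `(A_{kj})_{j,k<N}` and `(B_{N+i}(v_k))_{i,k<m}`, where `v_k = (z_k ^ j)_j`.
-/

section BorderedMinors

variable {R : Type*} [CommRing R] (A : Matrix ℕ ℕ R)

/-- The leading principal minor of order `k` of an infinite matrix; for the matrix `φ_{i-j}` it is
the Toeplitz determinant `D_k[φ]`. -/
def leadingMinor (k : ℕ) : R :=
  det (of fun i j : Fin k => A i j)

/-- The minor of order `k + 1` of an infinite matrix whose last row is replaced by the initial
segment of the sequence `v`; it is the numerator of the `k`-th bi-orthogonal polynomial when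
`v j = z ^ j`. -/
def borderedMinor (k : ℕ) (v : ℕ → R) : R :=
  det (of fun i j : Fin (k + 1) => if (i : ℕ) < k then A i j else v j)

theorem borderedMinor_eq_cramer (k : ℕ) (v : ℕ → R) :
    borderedMinor A k v =
      cramer (of fun i j : Fin (k + 1) => A i j)ᵀ (fun j => v j) (Fin.last k) := by
  rw [cramer_transpose_apply, borderedMinor]
  congr 1
  ext i j
  induction i using Fin.lastCases <;> simp [updateRow_apply]

theorem borderedMinor_eq_sum {k n : ℕ} (hkn : k < n) (v : ℕ → R) :
    borderedMinor A k v = ∑ j : Fin n, borderedMinor A k (Pi.single (j : ℕ) 1) * v j := by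
  have v_eq_sum : (fun i : Fin (k + 1) => v i) =
      ∑ j : Fin n, v j • fun i : Fin (k + 1) => Pi.single (M := fun _ => R) (j : ℕ) 1 (i : ℕ) := by
    ext i
    rw [Finset.sum_apply, Finset.sum_eq_single (⟨i, by omega⟩ : Fin n)]
    · simp
    · intro j _ hj
      have hij : (i : ℕ) ≠ j := fun h => hj (Fin.ext h.symm)
      simp [hij]
    · simp
  simp only [borderedMinor_eq_cramer, v_eq_sum, map_sum, map_smul, Finset.sum_apply, Pi.smul_apply,
    smul_eq_mul, mul_comm]

theorem borderedMinor_row_eq_zero {i k : ℕ} (hik : i < k) : borderedMinor A k (A i) = 0 :=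
  det_zero_of_row_eq (i := ⟨i, by omega⟩) (j := Fin.last k) (by simp [Fin.ext_iff, hik.ne])
    (by ext j; simp [hik])

theorem borderedMinor_single_of_lt {j k : ℕ} (hkj : k < j) :
    borderedMinor A k (Pi.single j 1) = 0 :=
  det_eq_zero_of_row_eq_zero (Fin.last k) fun i => by
    simp [Pi.single_apply, show (i : ℕ) ≠ j by omega]

theorem borderedMinor_single_self (k : ℕ) :
    borderedMinor A k (Pi.single k 1) = leadingMinor A k := by
  rw [borderedMinor, det_succ_row _ (Fin.last k), Fin.sum_univ_castSucc]
  simp [Pi.single_apply, leadingMinor, submatrix, (Fin.is_lt _).ne]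

/-- The matrix of order `N + m` whose columns are initial segments of the first `N` rows of `A` and
of the sequences `v k`, split into blocks after the first `N` rows and columns. -/
def multiBorderedMatrix (N : ℕ) {m : ℕ} (v : Fin m → ℕ → R) :
    Matrix (Fin N ⊕ Fin m) (Fin N ⊕ Fin m) R :=
  fromBlocks (of fun j k => A k j) (of fun j k => v k j)
    (of fun j k => A k (N + j)) (of fun j k => v k (N + j))

/-- The row operation replacing row `N + i` by the combination of rows with the coefficients of the
linear form `borderedMinor A (N + i)`. -/
def borderedMinorRowOp (N m : ℕ) : Matrix (Fin N ⊕ Fin m) (Fin N ⊕ Fin m) R :=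
  fromBlocks 1 0
    (of fun i j => borderedMinor A (N + i) (Pi.single (j : ℕ) 1))
    (of fun i j => borderedMinor A (N + i) (Pi.single (N + j : ℕ) 1))

theorem det_borderedMinorRowOp (N m : ℕ) :
    (borderedMinorRowOp A N m).det = ∏ i : Fin m, leadingMinor A (N + i) := by
  rw [borderedMinorRowOp, det_fromBlocks_zero₁₂, det_one, one_mul, det_of_isLowerTriangular]
  · simp only [of_apply, borderedMinor_single_self]
  · exact fun i j hij => borderedMinor_single_of_lt A (Nat.add_lt_add_left hij N)

theorem borderedMinorRowOp_mul_multiBorderedMatrix (N : ℕ) {m : ℕ} (v : Fin m → ℕ → R) :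
    borderedMinorRowOp A N m * multiBorderedMatrix A N v =
      fromBlocks (of fun j k : Fin N => A k j) (of fun j k => v k j)
        0 (of fun (i : Fin m) k => borderedMinor A (N + i) (v k)) := by
  have apply_rowOp (i : Fin m) (w : ℕ → R) :
      ∑ j : Fin N, borderedMinor A (N + i) (Pi.single (j : ℕ) 1) * w j +
        ∑ j : Fin m, borderedMinor A (N + i) (Pi.single (N + j : ℕ) 1) * w (N + j) =
      borderedMinor A (N + i) w := by
    simp [borderedMinor_eq_sum A (Nat.add_lt_add_left i.isLt N) w, Fin.sum_univ_add]
  rw [borderedMinorRowOp, multiBorderedMatrix, fromBlocks_multiply]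
  congr 1
  · simp
  · simp
  · ext i k
    exact (apply_rowOp i (A k)).trans (borderedMinor_row_eq_zero A (by omega))
  · ext i k
    exact apply_rowOp i (v k)

theorem prod_leadingMinor_mul_det_multiBorderedMatrix (N : ℕ) {m : ℕ} (v : Fin m → ℕ → R) :
    (∏ i : Fin m, leadingMinor A (N + i)) * (multiBorderedMatrix A N v).det =
      leadingMinor A N * det (of fun i k : Fin m => borderedMinor A (N + i) (v k)) := by
  rw [← det_borderedMinorRowOp, ← det_mul, borderedMinorRowOp_mul_multiBorderedMatrix,
    det_fromBlocks_zero₂₁, leadingMinor, ← det_transpose (of fun i j : Fin N => A i j)]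
  rfl

end BorderedMinors

section Field

variable {K : Type*} [Field K] (A : Matrix ℕ ℕ K)

theorem det_multiBorderedMatrix (N : ℕ) {m : ℕ} (v : Fin m → ℕ → K)
    (hA : ∀ i : Fin m, leadingMinor A (N + i) ≠ 0) :
    (multiBorderedMatrix A N v).det = leadingMinor A N *
      det (of fun i k : Fin m => borderedMinor A (N + i) (v k) / leadingMinor A (N + i)) := by
  have normalize_rows :
      det (of fun i k : Fin m => borderedMinor A (N + i) (v k)) =
        (∏ i : Fin m, leadingMinor A (N + i)) *
          det (of fun i k : Fin m =>
            borderedMinor A (N + i) (v k) / leadingMinor A (N + i)) := by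
    rw [← det_mul_column]
    simp only [of_apply, mul_div_cancel₀ _ (hA _)]
  have prod_ne_zero : ∏ i : Fin m, leadingMinor A (N + i) ≠ 0 :=
    Finset.prod_ne_zero_iff.mpr fun i _ => hA i
  refine mul_left_cancel₀ prod_ne_zero ?_
  rw [prod_leadingMinor_mul_det_multiBorderedMatrix, normalize_rows, mul_left_comm]

theorem bordered_toeplitz_eq_biorthopoly_det_general (n m : ℕ) (hmn : m ≤ n)
    (hA : ∀ j : ℕ, n - m ≤ j → j < n → leadingMinor A j ≠ 0) (v : Fin m → ℕ → K) :
    det (of fun j k : Fin n =>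
      if hk : (k : ℕ) < n - m then A k j else v ⟨(k : ℕ) - (n - m), by omega⟩ j) =
    leadingMinor A (n - m) * det (of fun i k : Fin m =>
      borderedMinor A (n - m + i) (v k) / leadingMinor A (n - m + i)) := by
  obtain ⟨N, rfl⟩ := Nat.exists_eq_add_of_le' hmn
  simp only [Nat.add_sub_cancel]
  rw [← det_multiBorderedMatrix A N v fun i => hA _ (by omega) (by omega),
    ← det_submatrix_equiv_self finSumFinEquiv]
  congr 1
  ext (j | j) (k | k) <;> simp [multiBorderedMatrix]

end Field

/-- Proposition 1.2 (first identity): the multi-bordered Toeplitz determinant with monomial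
borders equals `D_{n-m}[φ]` times the determinant of the matrix of monic bi-orthogonal
polynomials of the first kind evaluated at the border points. -/
theorem bordered_toeplitz_eq_biorthopoly_det
    (σ : Measure Circle) [IsFiniteMeasure σ] (f : Circle → ℂ) (hf : Integrable f σ)
    (n m : ℕ) (hm : 1 ≤ m) (hmn : m ≤ n)
    (hD : ∀ j : ℕ, n - m ≤ j → j ≤ n - 1 → toeplitzDet σ f j ≠ 0)
    (z : Fin m → ℂ) :
    Matrix.det (Matrix.of fun j k : Fin n =>
      if hk : (k : ℕ) < n - m then fcoef σ f ((k : ℤ) - (j : ℤ))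
      else z ⟨(k : ℕ) - (n - m), by have := k.isLt; omega⟩ ^ (j : ℕ)) =
    toeplitzDet σ f (n - m) *
      Matrix.det (Matrix.of fun i k : Fin m => monicBOP₁ σ f (n - m + (i : ℕ)) (z k)) :=
  bordered_toeplitz_eq_biorthopoly_det_general (of fun i j => fcoef σ f (i - j)) n m hmn
    (fun j hj hjn => hD j hj (Nat.le_sub_one_of_lt hjn)) fun k j => z k ^ j
end

section
/- Let φ be a finite complex Borel measure on the unit circle 𝕋, let 1 ≤ m < n, and assume D_j[φ] ≠ 0 for every j with 1 ≤ j ≤ n−m. Let A = (a_{jk})_{j,k=1}^{m} be a complex m×m matrix and x_1,…,x_m, y_1,…,y_m ∈ ℂ. Let D_n^F[φ; x_1,…,x_m; y_1,…,y_m; A] denote the determinant of the n×n matrix whose (j,k) entry equals φ_{j−k} for 1 ≤ j,k ≤ n−m, equals x_i^{j−1} when k = n−m+i and 1 ≤ j ≤ n−m, equals y_i^{k−1} when j = n−m+i and 1 ≤ k ≤ n−m, and equals a_{il} when j = n−m+i and k = n−m+l. Then D_n^F[φ; x⃗; y⃗; A] = D_{n−m}[φ] · det( a_{jk} − 𝒦_{n−m−1}(x_k,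 y_j) )_{j,k=1}^{m}. -/
open MeasureTheory Matrix Finset

/-- `A_j(y)`: the determinant of the `(j+1) × (j+1)` matrix whose `i`-th row (`0 ≤ i ≤ j-1`)
is `(φ_i, φ_{i-1}, …, φ_{i-j})` and whose last row is `(1, y, …, y^j)`. -/
noncomputable def Apoly (σ : Measure Circle) (f : Circle → ℂ) (k : ℕ) (y : ℂ) : ℂ :=
  Matrix.det (Matrix.of fun i j : Fin (k + 1) =>
    if (i : ℕ) < k then fcoef σ f ((i : ℤ) - (j : ℤ)) else y ^ (j : ℕ))

/-- `Â_j(x)`: the determinant of the `(j+1) × (j+1)` matrix whose first `j` columns are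
`(φ_{i-l})_{0 ≤ i ≤ j, 0 ≤ l ≤ j-1}` and whose last column is `(1, x, …, x^j)ᵀ`. -/
noncomputable def Ahat (σ : Measure Circle) (f : Circle → ℂ) (k : ℕ) (x : ℂ) : ℂ :=
  Matrix.det (Matrix.of fun i j : Fin (k + 1) =>
    if (j : ℕ) < k then fcoef σ f ((i : ℤ) - (j : ℤ)) else x ^ (i : ℕ))

/-- The reproducing kernel `𝒦_N(x,y) = Σ_{j=0}^{N} A_j(y) Â_j(x) / (D_j[φ] D_{j+1}[φ])` of the
bi-orthonormal polynomials on the unit circle. -/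
noncomputable def repKerT (σ : Measure Circle) (f : Circle → ℂ) (N : ℕ) (x y : ℂ) : ℂ :=
  ∑ j ∈ Finset.range (N + 1),
    Apoly σ f j y * Ahat σ f j x / (toeplitzDet σ f j * toeplitzDet σ f (j + 1))

/-!
Write `M_N` for the leading `N × N` block of an infinite array `M`. The Schur complement of `M_N` in
the framed matrix has entries `a_{jk} - v_jᵀ M_N⁻¹ u_k`, so it remains to identify the bilinear form
`vᵀ M_N⁻¹ u` with the kernel. Passing from `M_N` to `M_{N+1}` adds to this form the rank-one term
`(v_N - vᵀ M_N⁻¹ c) s⁻¹ (u_N - rᵀ M_N⁻¹ u)`, where `r` and `c` are the new row and column of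
`M_{N+1}` without their common entry and `s` is the Schur complement of `M_N` in `M_{N+1}`. The
other two factors are the Schur complements of `M_N` in the bordered matrices defining `A_N` and
`Â_N`, so all three are quotients of determinants and the term is the `N`-th summand of the kernel.
-/

section SchurComplement

lemma replicateRow_mul_mul_replicateCol {p q R : Type*} [Fintype p] [Fintype q]
    [NonUnitalSemiring R] (ι κ : Type*) (r : p → R) (A : Matrix p q R) (c : q → R) :
    replicateRow ι r * A * replicateCol κ c = of fun _ _ => r ⬝ᵥ A *ᵥ c := by
  rw [Matrix.mul_assoc]
  rfl

variable {p q R : Type*} [Fintype p] [DecidableEq p] [Fintype q] [DecidableEq q]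

lemma sumElim_dotProduct_inv_fromBlocks_mulVec_sumElim [CommRing R] {A : Matrix p p R}
    {B : Matrix p q R} {C : Matrix q p R} {D : Matrix q q R} (hA : IsUnit A.det)
    (hS : IsUnit (D - C * A⁻¹ * B).det) (v₁ u₁ : p → R) (v₂ u₂ : q → R) :
    Sum.elim v₁ v₂ ⬝ᵥ (fromBlocks A B C D)⁻¹ *ᵥ Sum.elim u₁ u₂ =
      v₁ ⬝ᵥ A⁻¹ *ᵥ u₁ +
        (v₂ - v₁ ᵥ* A⁻¹ ᵥ* B) ⬝ᵥ (D - C * A⁻¹ * B)⁻¹ *ᵥ (u₂ - C *ᵥ A⁻¹ *ᵥ u₁) := by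
  let _ := invertibleOfIsUnitDet A hA
  rw [← invOf_eq_nonsing_inv A] at hS ⊢
  let _ := invertibleOfIsUnitDet _ hS
  let _ := fromBlocks₁₁Invertible A B C D
  rw [← invOf_eq_nonsing_inv (fromBlocks A B C D), invOf_fromBlocks₁₁_eq,
    ← invOf_eq_nonsing_inv (D - C * ⅟A * B), fromBlocks_mulVec, sumElim_dotProduct_sumElim]
  simp only [Sum.elim_comp_inl, Sum.elim_comp_inr, add_mulVec, neg_mulVec, mulVec_sub,
    dotProduct_add, dotProduct_sub, dotProduct_neg, sub_dotProduct, sub_vecMul,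
    dotProduct_mulVec, vecMul_vecMul, Matrix.mul_assoc]
  ring

lemma sumElim_dotProduct_inv_fromBlocks_replicate_mulVec_sumElim [Field R] {A : Matrix p p R}
    {r c : p → R} {d : R} (hA : A.det ≠ 0) (hs : d - r ⬝ᵥ A⁻¹ *ᵥ c ≠ 0) (v u : p → R) (a b : R) :
    Sum.elim v (fun _ => a) ⬝ᵥ
        (fromBlocks A (replicateCol (Fin 1) c) (replicateRow (Fin 1) r) (of fun _ _ => d))⁻¹ *ᵥ
          Sum.elim u (fun _ => b) =
      v ⬝ᵥ A⁻¹ *ᵥ u +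
        (a - v ⬝ᵥ A⁻¹ *ᵥ c) * (b - r ⬝ᵥ A⁻¹ *ᵥ u) / (d - r ⬝ᵥ A⁻¹ *ᵥ c) := by
  have hschur : (of fun _ _ => d) - replicateRow (Fin 1) r * A⁻¹ * replicateCol (Fin 1) c =
      diagonal fun _ => d - r ⬝ᵥ A⁻¹ *ᵥ c := by
    rw [replicateRow_mul_mul_replicateCol]
    ext i j
    simp [Subsingleton.elim j i]
  have hrow : (fun _ => a) - v ᵥ* A⁻¹ ᵥ* replicateCol (Fin 1) c =
      fun _ => a - v ⬝ᵥ A⁻¹ *ᵥ c := by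
    rw [dotProduct_mulVec]
    rfl
  have hcol : (fun _ => b) - replicateRow (Fin 1) r *ᵥ A⁻¹ *ᵥ u = fun _ => b - r ⬝ᵥ A⁻¹ *ᵥ u :=
    rfl
  have hinv : (diagonal fun _ : Fin 1 => d - r ⬝ᵥ A⁻¹ *ᵥ c)⁻¹ =
      diagonal fun _ => (d - r ⬝ᵥ A⁻¹ *ᵥ c)⁻¹ := by
    refine inv_eq_right_inv ?_
    rw [diagonal_mul_diagonal, mul_inv_cancel₀ hs, diagonal_one]
  rw [sumElim_dotProduct_inv_fromBlocks_mulVec_sumElim hA.isUnit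
    (by rw [hschur]; simpa using hs), hschur, hinv, hrow, hcol]
  simp only [dotProduct, mulVec_diagonal, univ_unique, sum_singleton]
  ring

lemma dotProduct_inv_submatrix_mulVec_comp_equiv [CommRing R] (P : Matrix q q R) (e : p ≃ q)
    (v u : q → R) : (v ∘ e) ⬝ᵥ (P.submatrix e e)⁻¹ *ᵥ (u ∘ e) = v ⬝ᵥ P⁻¹ *ᵥ u := by
  rw [inv_submatrix_equiv, submatrix_mulVec_equiv, Function.comp_assoc, e.self_comp_symm,
    Function.comp_id, comp_equiv_dotProduct_comp_equiv]

end SchurComplement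

section LastRowColumn

variable {R : Type*} {N : ℕ}

lemma submatrix_finSumFinEquiv_eq_fromBlocks (P : Matrix (Fin (N + 1)) (Fin (N + 1)) R) :
    P.submatrix finSumFinEquiv finSumFinEquiv =
      fromBlocks (P.submatrix Fin.castSucc Fin.castSucc)
        (replicateCol (Fin 1) fun i => P i.castSucc (Fin.last N))
        (replicateRow (Fin 1) fun j => P (Fin.last N) j.castSucc)
        (of fun _ _ => P (Fin.last N) (Fin.last N)) := by
  ext (i | i) (j | j) <;> simp [Fin.castSucc, Fin.last, Fin.natAdd]

lemma comp_finSumFinEquiv_eq_sumElim (w : Fin (N + 1) → R) :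
    w ∘ finSumFinEquiv = Sum.elim (w ∘ Fin.castSucc) fun _ : Fin 1 => w (Fin.last N) := by
  ext (i | i) <;> simp [Fin.castSucc, Fin.last, Fin.natAdd]

lemma det_succ_eq_mul_schur [CommRing R] {P : Matrix (Fin (N + 1)) (Fin (N + 1)) R}
    {T : Matrix (Fin N) (Fin N) R} (hPT : P.submatrix Fin.castSucc Fin.castSucc = T)
    (hT : IsUnit T.det) :
    P.det = T.det * (P (Fin.last N) (Fin.last N) -
      (fun j => P (Fin.last N) j.castSucc) ⬝ᵥ T⁻¹ *ᵥ fun i => P i.castSucc (Fin.last N)) := by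
  let _ := invertibleOfIsUnitDet T hT
  rw [← det_submatrix_equiv_self finSumFinEquiv, submatrix_finSumFinEquiv_eq_fromBlocks, hPT,
    det_fromBlocks₁₁, det_fin_one, invOf_eq_nonsing_inv, replicateRow_mul_mul_replicateCol]
  rfl

lemma dotProduct_inv_mulVec_succ [Field R] {P : Matrix (Fin (N + 1)) (Fin (N + 1)) R}
    {T : Matrix (Fin N) (Fin N) R} (hPT : P.submatrix Fin.castSucc Fin.castSucc = T)
    (hT : T.det ≠ 0) (hP : P.det ≠ 0) (v u : Fin (N + 1) → R) :
    v ⬝ᵥ P⁻¹ *ᵥ u = (v ∘ Fin.castSucc) ⬝ᵥ T⁻¹ *ᵥ (u ∘ Fin.castSucc) +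
      (v (Fin.last N) - (v ∘ Fin.castSucc) ⬝ᵥ T⁻¹ *ᵥ fun i => P i.castSucc (Fin.last N)) *
      (u (Fin.last N) - (fun j => P (Fin.last N) j.castSucc) ⬝ᵥ T⁻¹ *ᵥ (u ∘ Fin.castSucc)) /
      (P (Fin.last N) (Fin.last N) -
        (fun j => P (Fin.last N) j.castSucc) ⬝ᵥ T⁻¹ *ᵥ fun i => P i.castSucc (Fin.last N)) := by
  have hs := right_ne_zero_of_mul (det_succ_eq_mul_schur hPT hT.isUnit ▸ hP)
  rw [← dotProduct_inv_submatrix_mulVec_comp_equiv P finSumFinEquiv,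
    submatrix_finSumFinEquiv_eq_fromBlocks, hPT, comp_finSumFinEquiv_eq_sumElim,
    comp_finSumFinEquiv_eq_sumElim,
    sumElim_dotProduct_inv_fromBlocks_replicate_mulVec_sumElim hT hs]

end LastRowColumn

section Blocks

variable {R : Type*} (M : ℕ → ℕ → R) (N : ℕ)

/-- The leading `N × N` block of the infinite array `M`. -/
def leadingBlock : Matrix (Fin N) (Fin N) R :=
  of fun i j => M i j

/-- The leading `(N + 1) × (N + 1)` block of `M` with its last row replaced by the beginning of
`v`. For Fourier coefficients and `v j = y ^ j` its determinant is `A_N(y)`. -/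
def rowBorderedBlock (v : ℕ → R) : Matrix (Fin (N + 1)) (Fin (N + 1)) R :=
  of fun i j => if (i : ℕ) < N then M i j else v j

/-- The leading `(N + 1) × (N + 1)` block of `M` with its last column replaced by the beginning of
`u`. For Fourier coefficients and `u i = x ^ i` its determinant is `Â_N(x)`. -/
def colBorderedBlock (u : ℕ → R) : Matrix (Fin (N + 1)) (Fin (N + 1)) R :=
  of fun i j => if (j : ℕ) < N then M i j else u i

/-- For `m ≤ n`, the `n × n` matrix whose top left block is the leading `(n - m) × (n - m)` block of
`M`, framed by the columns `u k`, the rows `v j` and the bottom right block `A`. -/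
def framedMatrix (n : ℕ) {m : ℕ} (u v : Fin m → ℕ → R) (A : Matrix (Fin m) (Fin m) R) :
    Matrix (Fin n) (Fin n) R :=
  of fun j k =>
    if hj : (j : ℕ) < n - m then
      if hk : (k : ℕ) < n - m then M j k else u ⟨k - (n - m), by omega⟩ j
    else
      if hk : (k : ℕ) < n - m then v ⟨j - (n - m), by omega⟩ k
      else A ⟨j - (n - m), by omega⟩ ⟨k - (n - m), by omega⟩

lemma det_framedMatrix [CommRing R] {m n : ℕ} (hmn : m ≤ n) (u v : Fin m → ℕ → R)
    (A : Matrix (Fin m) (Fin m) R) :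
    (framedMatrix M n u v A).det =
      (fromBlocks (leadingBlock M (n - m)) (of fun i k => u k i) (of fun j i => v j i) A).det := by
  rw [← det_submatrix_equiv_self (finSumFinEquiv.trans (finCongr (Nat.sub_add_cancel hmn)))]
  congr 1
  ext (i | i) (j | j) <;> simp [framedMatrix, leadingBlock]

end Blocks

section MinorKernel

variable {R K : Type*} [CommRing R] [Field K]

/-- The reproducing kernel of the array `M`, as a sum of `N` quotients of bordered minors; for
Fourier coefficients and sequences of powers it is `𝒦_{N-1}(x, y)`. -/
def minorKernel (M : ℕ → ℕ → K) (N : ℕ) (u v : ℕ → K) : K :=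
  ∑ j ∈ range N, (rowBorderedBlock M j v).det * (colBorderedBlock M j u).det /
    ((leadingBlock M j).det * (leadingBlock M (j + 1)).det)

/-- The bilinear form `vᵀ M_N⁻¹ u` on sequences, where `M_N` is the leading `N × N` block of `M`. It
is `0` when `M_N` is singular. -/
noncomputable def invForm (M : ℕ → ℕ → R) (N : ℕ) (v u : ℕ → R) : R :=
  (fun i : Fin N => v i) ⬝ᵥ (leadingBlock M N)⁻¹ *ᵥ fun i : Fin N => u i

variable {N : ℕ}

lemma det_leadingBlock_succ {M : ℕ → ℕ → R} (h : IsUnit (leadingBlock M N).det) :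
    (leadingBlock M (N + 1)).det =
      (leadingBlock M N).det * (M N N - invForm M N (M N) fun i => M i N) :=
  det_succ_eq_mul_schur (P := leadingBlock M (N + 1)) rfl h

lemma det_rowBorderedBlock {M : ℕ → ℕ → R} (h : IsUnit (leadingBlock M N).det) (v : ℕ → R) :
    (rowBorderedBlock M N v).det =
      (leadingBlock M N).det * (v N - invForm M N v fun i => M i N) := by
  have hblock :
      (rowBorderedBlock M N v).submatrix Fin.castSucc Fin.castSucc = leadingBlock M N := by
    ext; simp [rowBorderedBlock, leadingBlock]
  rw [det_succ_eq_mul_schur hblock h]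
  simp [rowBorderedBlock, invForm]

lemma det_colBorderedBlock {M : ℕ → ℕ → R} (h : IsUnit (leadingBlock M N).det) (u : ℕ → R) :
    (colBorderedBlock M N u).det =
      (leadingBlock M N).det * (u N - invForm M N (M N) u) := by
  have hblock :
      (colBorderedBlock M N u).submatrix Fin.castSucc Fin.castSucc = leadingBlock M N := by
    ext; simp [colBorderedBlock, leadingBlock]
  rw [det_succ_eq_mul_schur hblock h]
  simp [colBorderedBlock, invForm]

variable {M : ℕ → ℕ → K}

lemma invForm_succ (h : (leadingBlock M N).det ≠ 0) (h' : (leadingBlock M (N + 1)).det ≠ 0)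
    (v u : ℕ → K) :
    invForm M (N + 1) v u = invForm M N v u +
      (v N - invForm M N v fun i => M i N) * (u N - invForm M N (M N) u) /
        (M N N - invForm M N (M N) fun i => M i N) :=
  dotProduct_inv_mulVec_succ (P := leadingBlock M (N + 1)) rfl h h' _ _

theorem invForm_eq_minorKernel (hM : ∀ j ≤ N, (leadingBlock M j).det ≠ 0) (v u : ℕ → K) :
    invForm M N v u = minorKernel M N u v := by
  induction N with
  | zero => simp [invForm, minorKernel]
  | succ N ih =>
    have hN := hM N N.le_succ
    have hN' := hM (N + 1) le_rfl
    have hschur : M N N - invForm M N (M N) (fun i => M i N) ≠ 0 :=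
      right_ne_zero_of_mul (det_leadingBlock_succ hN.isUnit ▸ hN')
    rw [minorKernel, sum_range_succ, ← minorKernel, ← ih fun j hj => hM j (by omega),
      invForm_succ hN hN', det_rowBorderedBlock hN.isUnit, det_colBorderedBlock hN.isUnit,
      det_leadingBlock_succ hN.isUnit]
    field_simp

theorem framed_toeplitz_eq_repKer_det_general {ι : Type*} [Fintype ι] [DecidableEq ι]
    (hM : ∀ j, 1 ≤ j → j ≤ N → (leadingBlock M j).det ≠ 0) (A : Matrix ι ι K) (u v : ι → ℕ → K) :
    (fromBlocks (leadingBlock M N) (of fun i k => u k i) (of fun j i => v j i) A).det =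
      (leadingBlock M N).det * (of fun j k => A j k - minorKernel M N (u k) (v j)).det := by
  have hminors : ∀ j ≤ N, (leadingBlock M j).det ≠ 0 := by
    rintro (_ | j) hj
    · simp
    · exact hM (j + 1) j.succ_pos hj
  let _ := invertibleOfIsUnitDet _ (hminors N le_rfl).isUnit
  rw [det_fromBlocks₁₁, invOf_eq_nonsing_inv, Matrix.mul_assoc]
  congr 2
  ext j k
  rw [of_apply, ← invForm_eq_minorKernel hminors]
  rfl

end MinorKernel

lemma repKerT_pred_eq_minorKernel (σ : Measure Circle) (f : Circle → ℂ) {N : ℕ} (hN : 0 < N)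
    (x y : ℂ) : repKerT σ f (N - 1) x y =
      minorKernel (fun i j => fcoef σ f (i - j)) N (fun i => x ^ i) fun j => y ^ j := by
  rw [repKerT, Nat.sub_add_cancel hN]
  rfl

/-- Proposition 1.6: the framed Toeplitz determinant with monomial borders equals
`D_{n-m}[φ] · det( a_{jk} - 𝒦_{n-m-1}(x_k, y_j) )`. -/
theorem framed_toeplitz_eq_repKer_det
    (σ : Measure Circle) [IsFiniteMeasure σ] (f : Circle → ℂ) (hf : Integrable f σ)
    (n m : ℕ) (hm : 1 ≤ m) (hmn : m < n)
    (hD : ∀ j : ℕ, 1 ≤ j → j ≤ n - m → toeplitzDet σ f j ≠ 0)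
    (A : Matrix (Fin m) (Fin m) ℂ) (x y : Fin m → ℂ) :
    Matrix.det (Matrix.of fun j k : Fin n =>
      if hj : (j : ℕ) < n - m then
        (if hk : (k : ℕ) < n - m then fcoef σ f ((j : ℤ) - (k : ℤ))
         else x ⟨(k : ℕ) - (n - m), by have := k.isLt; omega⟩ ^ (j : ℕ))
      else
        (if hk : (k : ℕ) < n - m then y ⟨(j : ℕ) - (n - m), by have := j.isLt; omega⟩ ^ (k : ℕ)
         else A ⟨(j : ℕ) - (n - m), by have := j.isLt; omega⟩
                ⟨(k : ℕ) - (n - m), by have := k.isLt; omega⟩)) =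
    toeplitzDet σ f (n - m) *
      Matrix.det (Matrix.of fun j k : Fin m =>
        A j k - repKerT σ f (n - m - 1) (x k) (y j)) := by
  simp only [repKerT_pred_eq_minorKernel σ f (Nat.sub_pos_of_lt hmn)]
  exact (det_framedMatrix (fun i j => fcoef σ f (i - j)) hmn.le (fun k i => x k ^ i)
    (fun j i => y j ^ i) A).trans (framed_toeplitz_eq_repKer_det_general hD A _ _)
end
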